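/- arXiv:2603.05673 — 4 statements merged into one kernel-verified Lean document; each statement's English description precedes it below -/
import Mathlib

section
/- Let M₁, …, Mₙ be n×n real symmetric positive definite matrices. Then there exist an invertible n×n real matrix Z and positive scalars α₁, …, αₙ such that the matrices Tᵢ = αᵢ Zᵀ Mᵢ Z satisfy Trace(Tᵢ) = 1 for each i = 1, …, n and T₁ + T₂ + ⋯ + Tₙ = I, where I is the n×n identity matrix. -/
open Matrix

/-!
Prescribe traces `wᵢ > 0` with `∑ wᵢ = dim`. The function `t ↦ ∏ tᵢ ^ wᵢ / det (∑ tᵢ Mᵢ)` is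
homogeneous of degree zero, so its maximum over the standard simplex is a maximum over all nonzero
`t ≥ 0`, and every `tᵢ` is positive there because the numerator vanishes on the boundary. Hence the
logarithmic derivative in each coordinate direction vanishes at a maximizer `t`: with
`S = ∑ tᵢ Mᵢ`, this reads `tᵢ tr (S⁻¹ Mᵢ) = wᵢ`. If `Zᴴ S Z = 1`, then `Z Zᴴ = S⁻¹`, so the
matrices `tᵢ Zᴴ Mᵢ Z` sum to `1` and have traces `wᵢ`.
-/

section PositiveOrthant

variable {ι : Type*} [Fintype ι]

lemma pos_of_mem_stdSimplex {R : Type*} [Semiring R] [PartialOrder R] [Nontrivial R] {t : ι → R}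
    (ht : t ∈ stdSimplex R ι) : 0 < t := by
  refine lt_of_le_of_ne ht.1 ?_
  rintro rfl
  simpa using ht.2

lemma inv_sum_smul_mem_stdSimplex {K : Type*} [Field K] [LinearOrder K] [IsStrictOrderedRing K]
    {t : ι → K} (ht : 0 < t) : (∑ i, t i)⁻¹ • t ∈ stdSimplex K ι := by
  have hsum : 0 < ∑ i, t i := Fintype.sum_pos ht
  refine ⟨fun i => mul_nonneg (inv_pos.2 hsum).le (ht.le i), ?_⟩
  simp only [Pi.smul_apply, smul_eq_mul, ← Finset.mul_sum, inv_mul_cancel₀ hsum.ne']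

-- In the pointwise order on `ι → ℝ`, `Set.Ioi 0` is the nonnegative orthant with `0` removed.
lemma exists_mem_stdSimplex_isMaxOn_Ioi_zero_of_smul_eq [Nonempty ι] {f : (ι → ℝ) → ℝ}
    (hcont : ContinuousOn f (stdSimplex ℝ ι))
    (hsmul : ∀ c : ℝ, 0 < c → ∀ t, 0 < t → f (c • t) = f t) :
    ∃ t ∈ stdSimplex ℝ ι, IsMaxOn f (Set.Ioi 0) t := by
  classical
  obtain ⟨t, ht, hmax⟩ := (isCompact_stdSimplex ℝ ι).exists_isMaxOn
    ⟨_, single_mem_stdSimplex ℝ (Classical.arbitrary ι)⟩ hcont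
  refine ⟨t, ht, fun u (hu : 0 < u) => ?_⟩
  have hle := isMaxOn_iff.1 hmax _ (inv_sum_smul_mem_stdSimplex hu)
  rwa [hsmul _ (inv_pos.2 (Fintype.sum_pos hu)) u hu] at hle

lemma eventually_pos_add_smul {ι : Type*} [Finite ι] {t : ι → ℝ} (ht : ∀ i, 0 < t i)
    (v : ι → ℝ) : ∀ᶠ s : ℝ in nhds 0, ∀ i, 0 < (t + s • v) i :=
  Filter.eventually_all.2 fun i =>
    (Continuous.tendsto' (by fun_prop) 0 (t i) (by simp)).eventually_const_lt (ht i)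

lemma hasDerivAt_sum_mul_log_add_smul (w : ι → ℝ) {t : ι → ℝ} (ht : ∀ i, t i ≠ 0) (v : ι → ℝ) :
    HasDerivAt (fun s : ℝ => ∑ i, w i * Real.log ((t + s • v) i)) (∑ i, w i * (v i / t i)) 0 := by
  refine HasDerivAt.fun_sum fun i _ => HasDerivAt.const_mul (w i) ?_
  have hline : HasDerivAt (fun s : ℝ => (t + s • v) i) (v i) 0 := by
    simpa using ((hasDerivAt_id (0 : ℝ)).mul_const (v i)).const_add (t i)
  simpa using hline.log (by simpa using ht i)

end PositiveOrthant

section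

open scoped ComplexOrder

lemma posDef_sum_smul {ι m 𝕜 : Type*} [Fintype ι] [RCLike 𝕜] {M : ι → Matrix m m 𝕜}
    (hM : ∀ i, (M i).PosDef) {t : ι → ℝ} (ht : 0 < t) : (∑ i, t i • M i).PosDef := by
  classical
  obtain ⟨hnonneg, i, hi⟩ := Pi.lt_def.1 ht
  rw [← Finset.add_sum_erase _ _ (Finset.mem_univ i)]
  exact ((hM i).smul hi).add_posSemidef
    (posSemidef_sum _ fun j _ => (hM j).posSemidef.smul (hnonneg j))

section DetTrace

variable {m : Type*} [Fintype m] [DecidableEq m]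

lemma hasDerivAt_det_one_add_smul {𝕜 : Type*} [NontriviallyNormedField 𝕜] (A : Matrix m m 𝕜) :
    HasDerivAt (fun s : 𝕜 => (1 + s • A).det) A.trace 0 := by
  have hpoly := (det (1 + (Polynomial.X : Polynomial 𝕜) • A.map Polynomial.C)).hasDerivAt 0
  rw [derivative_det_one_add_X_smul] at hpoly
  convert! hpoly using 2 with s
  simp [eval_det, ← smul_eq_mul_diagonal]

lemma hasDerivAt_det_add_smul {𝕜 : Type*} [NontriviallyNormedField 𝕜] {A : Matrix m m 𝕜}
    (hA : IsUnit A) (B : Matrix m m 𝕜) :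
    HasDerivAt (fun s : 𝕜 => (A + s • B).det) (A.det * (A⁻¹ * B).trace) 0 := by
  have hdet : IsUnit A.det := (isUnit_iff_isUnit_det A).1 hA
  convert! (hasDerivAt_det_one_add_smul (A⁻¹ * B)).const_mul A.det using 2 with s
  rw [← det_mul, Matrix.mul_add, Matrix.mul_one, Matrix.mul_smul,
    mul_nonsing_inv_cancel_left _ _ hdet]

variable {𝕜 : Type*} [RCLike 𝕜]

lemma re_det_pos {A : Matrix m m 𝕜} (hA : A.PosDef) : 0 < RCLike.re A.det :=
  (RCLike.pos_iff.1 hA.det_pos).1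

lemma hasDerivAt_log_re_det_add_smul {A : Matrix m m 𝕜} (hA : A.PosDef) (B : Matrix m m 𝕜) :
    HasDerivAt (fun s : ℝ => Real.log (RCLike.re (A + s • B).det))
      (RCLike.re (A⁻¹ * B).trace) 0 := by
  have hdet : HasDerivAt (fun s : ℝ => (A + s • B).det) (A.det * (A⁻¹ * B).trace) 0 := by
    have hofReal : HasDerivAt (fun s : ℝ => (s : 𝕜)) 1 0 := by
      simpa using (RCLike.ofRealCLM (K := 𝕜)).hasDerivAt (x := (0 : ℝ))
    have hcomp :=
      HasDerivAt.scomp_of_eq (0 : ℝ) (hasDerivAt_det_add_smul hA.isUnit B) hofReal (by simp)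
    simpa [Function.comp_def] using hcomp
  have hre := (RCLike.reCLM (K := 𝕜)).hasFDerivAt.comp_hasDerivAt (0 : ℝ) hdet
  have hpos := re_det_pos hA
  convert! hre.log (by simpa using hpos.ne') using 1
  have him : RCLike.im A.det = 0 := (RCLike.pos_iff.1 hA.det_pos).2
  simp [him, RCLike.mul_re, hpos.ne']

lemma exists_isUnit_conjTranspose_mul_mul_eq_one {A : Matrix m m 𝕜} (hA : A.PosDef) :
    ∃ Z : Matrix m m 𝕜, IsUnit Z ∧ Zᴴ * A * Z = 1 := by
  open scoped MatrixOrder in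
  obtain ⟨B, hB, rfl⟩ := CStarAlgebra.isStrictlyPositive_iff_eq_star_mul_self.1
    hA.isStrictlyPositive
  have hdet : IsUnit B.det := (isUnit_iff_isUnit_det B).1 hB
  refine ⟨B⁻¹, isUnit_nonsing_inv_iff.2 hB, ?_⟩
  rw [star_eq_conjTranspose, ← Matrix.mul_assoc, ← conjTranspose_mul, mul_nonsing_inv _ hdet,
    conjTranspose_one, Matrix.one_mul, mul_nonsing_inv _ hdet]

lemma trace_mul_mul_of_mul_mul_eq_one {R : Type*} [CommRing R] {A Y Z : Matrix m m R}
    (h : Y * A * Z = 1) (B : Matrix m m R) : (Y * B * Z).trace = (A⁻¹ * B).trace := by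
  have hinv : A⁻¹ = Z * Y := inv_eq_left_inv <| by
    rwa [Matrix.mul_assoc, mul_eq_one_comm]
  rw [hinv, trace_mul_cycle]

end DetTrace

lemma ofReal_re_trace {m 𝕜 : Type*} [Fintype m] [RCLike 𝕜] {A : Matrix m m 𝕜}
    (hA : A.IsHermitian) : (RCLike.re A.trace : 𝕜) = A.trace := by
  rw [← RCLike.conj_eq_iff_re, starRingEnd_apply, ← trace_conjTranspose, hA.eq]

section Scaling

variable {ι m 𝕜 : Type*} [Fintype ι] [Fintype m] [DecidableEq m] [RCLike 𝕜]
  {w : ι → ℝ} {M : ι → Matrix m m 𝕜}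

/-- The objective `∏ᵢ tᵢ ^ wᵢ / det (∑ᵢ tᵢ Mᵢ)` whose maximizers supply the scalars `αᵢ` of
Barvinok's lemma with prescribed traces `wᵢ`. The real part only turns the determinant, which is
already real when the `Mᵢ` are Hermitian, into an element of `ℝ`. -/
noncomputable def scalingFunctional (w : ι → ℝ) (M : ι → Matrix m m 𝕜) (t : ι → ℝ) : ℝ :=
  (∏ i, t i ^ w i) / RCLike.re (∑ i, t i • M i).det

lemma scalingFunctional_smul (hw : ∑ i, w i = Fintype.card m) {c : ℝ} (hc : 0 < c)
    {t : ι → ℝ} (ht : 0 ≤ t) :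
    scalingFunctional w M (c • t) = scalingFunctional w M t := by
  have hprod : ∏ i, (c • t) i ^ w i = c ^ Fintype.card m * ∏ i, t i ^ w i := by
    simp only [Pi.smul_apply, smul_eq_mul, fun i => Real.mul_rpow hc.le (ht i),
      Finset.prod_mul_distrib, ← Real.rpow_sum_of_pos hc, hw, Real.rpow_natCast]
  have hdet : RCLike.re (∑ i, (c • t) i • M i).det
      = c ^ Fintype.card m * RCLike.re (∑ i, t i • M i).det := by
    simp only [Pi.smul_apply, smul_eq_mul, mul_smul, ← Finset.smul_sum, det_smul_of_tower,
      RCLike.smul_re]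
  rw [scalingFunctional, hprod, hdet, mul_div_mul_left _ _ (pow_pos hc _).ne', scalingFunctional]

lemma continuousOn_scalingFunctional (hw : 0 ≤ w) (hM : ∀ i, (M i).PosDef) :
    ContinuousOn (scalingFunctional w M) (Set.Ioi 0) := by
  refine ContinuousOn.div ?_ ?_ fun t ht => (re_det_pos (posDef_sum_smul hM ht)).ne'
  · exact (continuous_finsetProd _ fun i _ =>
      (continuous_apply i).rpow_const fun _ => .inr (hw i)).continuousOn
  · exact (RCLike.continuous_re.comp (Continuous.matrix_det (by fun_prop))).continuousOn

lemma scalingFunctional_pos [Nonempty ι] (hM : ∀ i, (M i).PosDef) {t : ι → ℝ}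
    (ht : ∀ i, 0 < t i) : 0 < scalingFunctional w M t :=
  div_pos (Finset.prod_pos fun i _ => Real.rpow_pos_of_pos (ht i) _)
    (re_det_pos (posDef_sum_smul hM (lt_of_strongLT ht)))

lemma exists_pos_isMaxOn_scalingFunctional [Nonempty ι] (hw : ∀ i, 0 < w i)
    (hsum : ∑ i, w i = Fintype.card m) (hM : ∀ i, (M i).PosDef) :
    ∃ t : ι → ℝ, (∀ i, 0 < t i) ∧ IsMaxOn (scalingFunctional w M) (Set.Ioi 0) t := by
  obtain ⟨t, ht, hmax⟩ := exists_mem_stdSimplex_isMaxOn_Ioi_zero_of_smul_eq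
    ((continuousOn_scalingFunctional (fun i => (hw i).le) hM).mono fun _ => pos_of_mem_stdSimplex)
    fun c hc t ht => scalingFunctional_smul hsum hc ht.le
  refine ⟨t, fun i => (ht.1 i).lt_of_ne' fun hzero => ?_, hmax⟩
  have hvanish : scalingFunctional w M t = 0 := by
    rw [scalingFunctional, Finset.prod_eq_zero (Finset.mem_univ i)
      (by rw [hzero, Real.zero_rpow (hw i).ne']), zero_div]
  have hle : scalingFunctional w M 1 ≤ scalingFunctional w M t := hmax (zero_lt_one (α := ι → ℝ))
  exact (hvanish ▸ hle).not_gt (scalingFunctional_pos hM fun _ => one_pos)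

lemma log_scalingFunctional [Nonempty ι] (hM : ∀ i, (M i).PosDef) {t : ι → ℝ}
    (ht : ∀ i, 0 < t i) :
    Real.log (scalingFunctional w M t)
      = ∑ i, w i * Real.log (t i) - Real.log (RCLike.re (∑ i, t i • M i).det) := by
  have hpow (i : ι) : t i ^ w i ≠ 0 := (Real.rpow_pos_of_pos (ht i) _).ne'
  have hdet := (re_det_pos (posDef_sum_smul hM (lt_of_strongLT ht))).ne'
  rw [scalingFunctional, Real.log_div (Finset.prod_ne_zero_iff.2 fun i _ => hpow i) hdet,
    Real.log_prod fun i _ => hpow i]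
  simp only [fun i => Real.log_rpow (ht i)]

lemma hasDerivAt_log_scalingFunctional_add_smul [Nonempty ι] (hM : ∀ i, (M i).PosDef)
    {t : ι → ℝ} (ht : ∀ i, 0 < t i) (v : ι → ℝ) :
    HasDerivAt (fun s : ℝ => Real.log (scalingFunctional w M (t + s • v)))
      (∑ i, w i * (v i / t i) - RCLike.re ((∑ i, t i • M i)⁻¹ * ∑ i, v i • M i).trace) 0 := by
  have hS : (∑ i, t i • M i).PosDef := posDef_sum_smul hM (lt_of_strongLT ht)
  refine ((hasDerivAt_sum_mul_log_add_smul w (fun i => (ht i).ne') v).sub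
    (hasDerivAt_log_re_det_add_smul hS (∑ i, v i • M i))).congr_of_eventuallyEq ?_
  filter_upwards [eventually_pos_add_smul ht v] with s hs
  have hsum : ∑ i, (t + s • v) i • M i = ∑ i, t i • M i + s • ∑ i, v i • M i := by
    simp only [Pi.add_apply, Pi.smul_apply, smul_eq_mul, add_smul, mul_smul,
      Finset.sum_add_distrib, Finset.smul_sum]
  rw [log_scalingFunctional hM hs, hsum]
  rfl

lemma mul_re_trace_inv_mul_eq_of_isMaxOn_scalingFunctional (hM : ∀ i, (M i).PosDef)
    {t : ι → ℝ} (ht : ∀ i, 0 < t i) (hmax : IsMaxOn (scalingFunctional w M) (Set.Ioi 0) t)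
    (i : ι) : t i * RCLike.re ((∑ j, t j • M j)⁻¹ * M i).trace = w i := by
  classical
  have : Nonempty ι := ⟨i⟩
  have hlocal : IsLocalMax
      (fun s : ℝ => Real.log (scalingFunctional w M (t + s • Pi.single i 1))) 0 := by
    filter_upwards [eventually_pos_add_smul ht (Pi.single i 1)] with s hs
    rw [zero_smul, add_zero]
    exact Real.log_le_log (scalingFunctional_pos hM hs) (hmax (lt_of_strongLT hs))
  have hzero := hlocal.hasDerivAt_eq_zero
    (hasDerivAt_log_scalingFunctional_add_smul hM ht (Pi.single i 1))
  have htrace : w i / t i = RCLike.re ((∑ j, t j • M j)⁻¹ * M i).trace := by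
    simpa [sub_eq_zero, Pi.single_apply, ite_div, ite_smul, div_eq_mul_inv] using hzero
  rw [← htrace, mul_div_cancel₀ _ (ht i).ne']

end Scaling

theorem stmt_1_general {ι m 𝕜 : Type*} [Fintype ι] [Fintype m] [DecidableEq m] [RCLike 𝕜]
    {w : ι → ℝ} (hw : ∀ i, 0 < w i) (hsum : ∑ i, w i = Fintype.card m)
    {M : ι → Matrix m m 𝕜} (hM : ∀ i, (M i).PosDef) :
    ∃ (Z : Matrix m m 𝕜) (α : ι → ℝ),
      IsUnit Z ∧ (∀ i, 0 < α i) ∧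
      (∀ i, (α i • (Zᴴ * M i * Z)).trace = w i) ∧
      ∑ i, α i • (Zᴴ * M i * Z) = 1 := by
  cases isEmpty_or_nonempty ι with
  | inl _ =>
    have : IsEmpty m := Fintype.card_eq_zero_iff.1 (by simpa [eq_comm] using hsum)
    exact ⟨1, 1, isUnit_one, isEmptyElim, isEmptyElim, Subsingleton.elim _ _⟩
  | inr _ =>
    obtain ⟨t, ht, hmax⟩ := exists_pos_isMaxOn_scalingFunctional hw hsum hM
    obtain ⟨Z, hZ, hone⟩ :=
      exists_isUnit_conjTranspose_mul_mul_eq_one (posDef_sum_smul hM (lt_of_strongLT ht))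
    refine ⟨Z, t, hZ, ht, fun i => ?_, ?_⟩
    · rw [trace_smul, ← ofReal_re_trace (isHermitian_conjTranspose_mul_mul Z (hM i).isHermitian),
        trace_mul_mul_of_mul_mul_eq_one hone, RCLike.real_smul_ofReal, ← RCLike.ofReal_mul,
        mul_re_trace_inv_mul_eq_of_isMaxOn_scalingFunctional hM ht hmax]
    · simpa only [Matrix.mul_sum, Matrix.sum_mul, Matrix.mul_smul, Matrix.smul_mul] using hone

end

/-- Barvinok's scaling lemma: for symmetric positive definite matrices
`M₁, …, Mₙ` there exist an invertible matrix `Z` and positive scalars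
`α₁, …, αₙ` such that `Tᵢ = αᵢ Zᵀ Mᵢ Z` has trace `1` for each `i` and
`T₁ + ⋯ + Tₙ = I`. -/
theorem stmt_1 (n : ℕ) (M : Fin n → Matrix (Fin n) (Fin n) ℝ)
    (hM : ∀ i, (M i).PosDef) :
    ∃ (Z : Matrix (Fin n) (Fin n) ℝ) (α : Fin n → ℝ),
      IsUnit Z ∧ (∀ i, 0 < α i) ∧
      (∀ i, (α i • (Zᵀ * M i * Z)).trace = 1) ∧
      ∑ i, α i • (Zᵀ * M i * Z) = (1 : Matrix (Fin n) (Fin n) ℝ) := by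
  simpa only [conjTranspose_eq_transpose_of_trivial, Pi.one_apply, RCLike.ofReal_one] using
    stmt_1_general (w := 1) (fun _ => one_pos) (by simp) hM
end

section
/- Let Q₁, …, Qₙ be n×n real symmetric positive definite matrices. Then the function f : ℝⁿ → ℝ defined by f(t₁, …, tₙ) = log det(e^{t₁} Q₁ + e^{t₂} Q₂ + ⋯ + e^{tₙ} Qₙ) is convex on ℝⁿ. -/
open Matrix

/-!
At a point `x`, put `S = ∑ᵢ e^{xᵢ} Qᵢ = yᴴ y` and `Pᵢ = e^{xᵢ} (yᴴ)⁻¹ Qᵢ y⁻¹`, so that the `Pᵢ` are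
positive semidefinite with sum `1`. In an eigenbasis of `∑ᵢ e^{tᵢ} Pᵢ` every eigenvalue is an
average of the numbers `e^{tᵢ}`, weighted by diagonal entries of the `Pᵢ`. Jensen's inequality for
the logarithm, summed over the eigenvalues, gives `∑ᵢ tᵢ tr Pᵢ ≤ log det (∑ᵢ e^{tᵢ} Pᵢ)`. With
`t = z - x` this says that `z ↦ log det (∑ᵢ e^{zᵢ} Qᵢ)` lies above an affine function that touches
it at `x`, and a function with such an affine minorant at every point is convex.
-/

theorem convexOn_of_exists_subgradient {𝕜 E β : Type*} [Ring 𝕜] [PartialOrder 𝕜]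
    [AddCommGroup E] [Module 𝕜 E] [AddCommGroup β] [PartialOrder β] [IsOrderedAddMonoid β]
    [Module 𝕜 β] [PosSMulMono 𝕜 β] {s : Set E} {f : E → β} (hs : Convex 𝕜 s)
    (hf : ∀ x ∈ s, ∃ g : E →ₗ[𝕜] β, ∀ y ∈ s, f x + g (y - x) ≤ f y) : ConvexOn 𝕜 s f := by
  refine ⟨hs, fun x hx y hy a b ha hb hab => ?_⟩
  obtain ⟨g, hg⟩ := hf _ (hs hx hy ha hb hab)
  set z := a • x + b • y with hz
  have hbary : a • (x - z) + b • (y - z) = 0 := by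
    rw [smul_sub, smul_sub, sub_add_sub_comm, ← hz, ← add_smul, hab, one_smul, sub_self]
  calc f z = (a + b) • f z + g (a • (x - z) + b • (y - z)) := by
        rw [hab, one_smul, hbary, map_zero, add_zero]
    _ = a • (f z + g (x - z)) + b • (f z + g (y - z)) := by
        rw [map_add, map_smul, map_smul, add_smul, smul_add, smul_add, add_add_add_comm]
    _ ≤ a • f x + b • f y :=
        add_le_add (smul_le_smul_of_nonneg_left (hg x hx) ha)
          (smul_le_smul_of_nonneg_left (hg y hy) hb)

section RCLike

open scoped ComplexOrder

variable {𝕜 ι m : Type*} [RCLike 𝕜] [Fintype ι]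

theorem posDef_sum_smul_of_posDef_sum {Q : ι → Matrix m m 𝕜} (hQ : ∀ i, (Q i).PosSemidef)
    (hsum : (∑ i, Q i).PosDef) {c : ι → ℝ} (hc : ∀ i, 0 < c i) : (∑ i, c i • Q i).PosDef := by
  cases isEmpty_or_nonempty ι with
  | inl _ => simpa only [Finset.univ_eq_empty, Finset.sum_empty] using hsum
  | inr _ =>
    obtain ⟨k, hk⟩ := Finite.exists_min c
    have hsplit : ∑ i, c i • Q i = c k • ∑ i, Q i + ∑ i, (c i - c k) • Q i := by
      rw [Finset.smul_sum, ← Finset.sum_add_distrib]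
      exact Finset.sum_congr rfl fun i _ => by rw [← add_smul, add_sub_cancel]
    rw [hsplit]
    exact (hsum.smul (hc k)).add_posSemidef
      (posSemidef_sum _ fun i _ => (hQ i).smul (sub_nonneg.2 (hk i)))

theorem posDef_sum_univ {Q : ι → Matrix ι ι 𝕜} (hQ : ∀ i, (Q i).PosDef) : (∑ i, Q i).PosDef := by
  cases isEmpty_or_nonempty ι with
  | inl _ => exact ⟨Subsingleton.elim _ _, fun v hv => absurd (Subsingleton.elim v 0) hv⟩
  | inr _ => exact posDef_sum Finset.univ_nonempty fun i _ => hQ i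

variable [Fintype m] [DecidableEq m]

theorem log_re_det_eq_sum_log_eigenvalues {A : Matrix m m 𝕜} (hA : A.PosDef) :
    Real.log (RCLike.re A.det) = ∑ j, Real.log (hA.isHermitian.eigenvalues j) := by
  rw [hA.isHermitian.det_eq_prod_eigenvalues, ← RCLike.ofReal_prod, RCLike.ofReal_re,
    Real.log_prod fun j _ => (hA.eigenvalues_pos j).ne']

theorem log_re_det_mul_det {A B : Matrix m m 𝕜} (hA : A.PosDef) (hB : B.PosDef) :
    Real.log (RCLike.re (A.det * B.det)) =
      Real.log (RCLike.re A.det) + Real.log (RCLike.re B.det) := by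
  obtain ⟨hA_re, hA_im⟩ := RCLike.pos_iff.1 hA.det_pos
  obtain ⟨hB_re, -⟩ := RCLike.pos_iff.1 hB.det_pos
  rw [RCLike.mul_re, hA_im, zero_mul, sub_zero, Real.log_mul hA_re.ne' hB_re.ne']

theorem sum_mul_re_trace_le_sum_re_diag_of_concaveOn {P : ι → Matrix m m 𝕜}
    (hP : ∀ i, (P i).PosSemidef) (hsum : ∑ i, P i = 1) {s : Set ℝ} {f : ℝ → ℝ}
    (hf : ConcaveOn ℝ s f) {c : ι → ℝ} (hc : ∀ i, c i ∈ s) :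
    ∑ i, f (c i) * RCLike.re (P i).trace ≤ ∑ j, f (RCLike.re ((∑ i, c i • P i) j j)) := by
  have hweights (j : m) : ∑ i, RCLike.re (P i j j) = 1 := by
    rw [← map_sum, ← Matrix.sum_apply, hsum, one_apply_eq, RCLike.one_re]
  have hjensen (j : m) :
      ∑ i, RCLike.re (P i j j) * f (c i) ≤ f (RCLike.re ((∑ i, c i • P i) j j)) := by
    have h := hf.le_map_sum (t := Finset.univ) (w := fun i => RCLike.re (P i j j)) (p := c)
      (fun i _ => (RCLike.nonneg_iff.1 (hP i).diag_nonneg).1) (hweights j) fun i _ => hc i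
    simpa [Matrix.sum_apply, RCLike.smul_re, mul_comm] using h
  calc ∑ i, f (c i) * RCLike.re (P i).trace
      = ∑ j, ∑ i, RCLike.re (P i j j) * f (c i) := by
        rw [Finset.sum_comm]
        refine Finset.sum_congr rfl fun i _ => ?_
        rw [trace, map_sum, mul_comm, Finset.sum_mul]
        rfl
    _ ≤ ∑ j, f (RCLike.re ((∑ i, c i • P i) j j)) := Finset.sum_le_sum fun j _ => hjensen j

theorem sum_mul_re_trace_le_sum_eigenvalues_of_concaveOn {P : ι → Matrix m m 𝕜}
    (hP : ∀ i, (P i).PosSemidef) (hsum : ∑ i, P i = 1) {s : Set ℝ} {f : ℝ → ℝ}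
    (hf : ConcaveOn ℝ s f) {c : ι → ℝ} (hc : ∀ i, c i ∈ s)
    (hA : (∑ i, c i • P i).IsHermitian) :
    ∑ i, f (c i) * RCLike.re (P i).trace ≤ ∑ j, f (hA.eigenvalues j) := by
  let φ := Unitary.conjStarAlgAut 𝕜 (Matrix m m 𝕜) (star hA.eigenvectorUnitary)
  have hdiag : ∑ i, c i • φ (P i) = diagonal (RCLike.ofReal ∘ hA.eigenvalues) := by
    simp only [← hA.conjStarAlgAut_star_eigenvectorUnitary, φ, map_sum,
      Unitary.conjStarAlgAut_star_apply, mul_smul_comm, smul_mul_assoc]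
  have hφ_posSemidef (i : ι) : (φ (P i)).PosSemidef := by
    rw [Unitary.conjStarAlgAut_star_apply]
    exact (hP i).conjTranspose_mul_mul_same _
  have hφ_trace (i : ι) : (φ (P i)).trace = (P i).trace := by
    rw [Unitary.conjStarAlgAut_star_apply, trace_mul_cycle,
      Unitary.mul_star_self_of_mem hA.eigenvectorUnitary.2, one_mul]
  have hφ_sum : ∑ i, φ (P i) = 1 := by rw [← map_sum, hsum, map_one]
  simpa only [hφ_trace, hdiag, diagonal_apply_eq, Function.comp_apply, RCLike.ofReal_re]
    using sum_mul_re_trace_le_sum_re_diag_of_concaveOn hφ_posSemidef hφ_sum hf hc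

theorem sum_log_mul_re_trace_le_log_re_det {P : ι → Matrix m m 𝕜} (hP : ∀ i, (P i).PosSemidef)
    (hsum : ∑ i, P i = 1) {c : ι → ℝ} (hc : ∀ i, 0 < c i) :
    ∑ i, Real.log (c i) * RCLike.re (P i).trace ≤
      Real.log (RCLike.re (∑ i, c i • P i).det) := by
  have hposDef : (∑ i, c i • P i).PosDef :=
    posDef_sum_smul_of_posDef_sum hP (hsum ▸ PosDef.one) hc
  rw [log_re_det_eq_sum_log_eigenvalues hposDef]
  exact sum_mul_re_trace_le_sum_eigenvalues_of_concaveOn hP hsum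
    strictConcaveOn_log_Ioi.concaveOn hc hposDef.isHermitian

open scoped MatrixOrder in
theorem exists_isUnit_conjTranspose_mul_self {S : Matrix m m 𝕜} (hS : S.PosDef) :
    ∃ y : Matrix m m 𝕜, IsUnit y ∧ S = yᴴ * y :=
  CStarAlgebra.isStrictlyPositive_iff_eq_star_mul_self.1 hS.isStrictlyPositive

/-- With `S = ∑ₖ Qₖ` and `c = e^u`, the number `tr (S⁻¹ Qᵢ)` is the `i`-th partial derivative of
`log det (∑ᵢ e^{uᵢ} Qᵢ)` at `u = 0`. -/
theorem log_re_det_sum_add_sum_log_mul_re_trace_le {Q : ι → Matrix m m 𝕜}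
    (hQ : ∀ i, (Q i).PosSemidef) (hsum : (∑ i, Q i).PosDef) {c : ι → ℝ} (hc : ∀ i, 0 < c i) :
    Real.log (RCLike.re (∑ i, Q i).det) +
        ∑ i, Real.log (c i) * RCLike.re ((∑ k, Q k)⁻¹ * Q i).trace ≤
      Real.log (RCLike.re (∑ i, c i • Q i).det) := by
  obtain ⟨y, hy, hyy⟩ := exists_isUnit_conjTranspose_mul_self hsum
  have hy_det : IsUnit y.det := (isUnit_iff_isUnit_det y).1 hy
  have hyH_det : IsUnit yᴴ.det := by rwa [det_conjTranspose, isUnit_star]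
  let P (i : ι) : Matrix m m 𝕜 := yᴴ⁻¹ * Q i * y⁻¹
  have hP (i : ι) : (P i).PosSemidef := by
    simpa only [conjTranspose_nonsing_inv] using (hQ i).conjTranspose_mul_mul_same y⁻¹
  have hP_sum : ∑ i, P i = 1 := by
    rw [← Finset.sum_mul, ← Finset.mul_sum, hyy, nonsing_inv_mul_cancel_left _ _ hyH_det,
      mul_nonsing_inv _ hy_det]
  have hP_trace (i : ι) : (P i).trace = ((∑ k, Q k)⁻¹ * Q i).trace := by
    rw [trace_mul_cycle, hyy, Matrix.mul_inv_rev]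
  have hdet : (∑ i, c i • Q i).det = (∑ i, Q i).det * (∑ i, c i • P i).det := by
    have hconj : ∑ i, c i • Q i = yᴴ * (∑ i, c i • P i) * y := by
      simp only [P, Finset.mul_sum, Finset.sum_mul, mul_smul_comm, smul_mul_assoc, mul_assoc,
        mul_nonsing_inv_cancel_left _ _ hyH_det, nonsing_inv_mul _ hy_det, mul_one]
    rw [hconj, det_mul_right_comm, ← det_mul, ← hyy, det_mul]
  rw [hdet, log_re_det_mul_det hsum (posDef_sum_smul_of_posDef_sum hP (hP_sum ▸ PosDef.one) hc)]
  simpa only [hP_trace, add_le_add_iff_left] using sum_log_mul_re_trace_le_log_re_det hP hP_sum hc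

theorem stmt_2_general {Q : ι → Matrix m m 𝕜} (hQ : ∀ i, (Q i).PosSemidef)
    (hsum : (∑ i, Q i).PosDef) :
    ConvexOn ℝ Set.univ
      (fun t : ι → ℝ => Real.log (RCLike.re (∑ i, Real.exp (t i) • Q i).det)) := by
  refine convexOn_of_exists_subgradient convex_univ fun x _ => ?_
  let S := ∑ i, Real.exp (x i) • Q i
  refine ⟨Fintype.linearCombination ℝ fun i =>
    RCLike.re (S⁻¹ * (Real.exp (x i) • Q i)).trace, fun z _ => ?_⟩
  have hle := log_re_det_sum_add_sum_log_mul_re_trace_le (c := fun i => Real.exp (z i - x i))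
    (fun i => (hQ i).smul (Real.exp_pos (x i)).le)
    (posDef_sum_smul_of_posDef_sum hQ hsum fun i => Real.exp_pos (x i)) fun i => Real.exp_pos _
  simpa only [Fintype.linearCombination_apply, Pi.sub_apply, smul_eq_mul, Real.log_exp, smul_smul,
    ← Real.exp_add, sub_add_cancel] using hle

end RCLike

/-- For symmetric positive definite matrices `Q₁, …, Qₙ`, the function
`f(t₁,…,tₙ) = log det(e^{t₁} Q₁ + ⋯ + e^{tₙ} Qₙ)` is convex on `ℝⁿ`. -/
theorem stmt_2 (n : ℕ) (Q : Fin n → Matrix (Fin n) (Fin n) ℝ)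
    (hQ : ∀ i, (Q i).PosDef) :
    ConvexOn ℝ Set.univ
      (fun t : Fin n → ℝ => Real.log (∑ i, Real.exp (t i) • Q i).det) :=
  stmt_2_general (fun i => (hQ i).posSemidef) (posDef_sum_univ hQ)
end

section
/- Let A₁, …, Aₙ be invertible n×n real matrices. Then there exists an invertible n×n real matrix Z such that (1/‖A₁Z‖_F²) Zᵀ A₁ᵀ A₁ Z + (1/‖A₂Z‖_F²) Zᵀ A₂ᵀ A₂ Z + ⋯ + (1/‖AₙZ‖_F²) Zᵀ Aₙᵀ Aₙ Z = I, where each summand (1/‖AᵢZ‖_F²) Zᵀ Aᵢᵀ Aᵢ Z has trace 1. -/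
open Matrix

/-! The matrix `Z` is obtained by maximizing `‖det Z‖ / ∏ᵢ ‖Aᵢ Z‖ ^ wᵢ`, where the real weights `wᵢ`
add up to the size of `Z`. This function is invariant under scaling of `Z`, so it attains its
maximum over nonzero matrices on the unit sphere, and the maximum is positive, so `Z` is
invertible. Along the curve `t ↦ Z (1 + t H)` its logarithm has derivative
`⟪1 - ∑ᵢ (wᵢ / ‖Aᵢ Z‖²) (Aᵢ Z)ᴴ (Aᵢ Z), H⟫` at `t = 0`; this vanishes for every `H`. -/

section FrobeniusInner

open scoped Matrix.Norms.Frobenius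

variable {𝕜 l m n : Type*} [RCLike 𝕜] [Fintype l] [Fintype m] [Fintype n]

theorem trace_conjTranspose_mul_self_eq_frobenius_norm_sq (B : Matrix m n 𝕜) :
    (Bᴴ * B).trace = ((‖B‖ ^ 2 : ℝ) : 𝕜) := by
  have norm_sq : ‖B‖ ^ 2 = ∑ i, ∑ j, ‖B i j‖ ^ 2 := by
    simp only [frobenius_norm_def, ← Real.sqrt_eq_rpow, Real.rpow_two]
    exact Real.sq_sqrt (by positivity)
  rw [norm_sq, Finset.sum_comm]
  simp [Matrix.trace, Matrix.mul_apply, RCLike.conj_mul]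

theorem trace_transpose_mul_self_eq_frobenius_norm_sq (B : Matrix m n ℝ) :
    (Bᵀ * B).trace = ‖B‖ ^ 2 := by
  simpa using trace_conjTranspose_mul_self_eq_frobenius_norm_sq B

theorem mul_ne_zero_of_mulVec_injective {R l m n : Type*} [Semiring R] [Fintype m] [Nonempty n]
    {B : Matrix l m R} (hB : Function.Injective B.mulVec) {Z : Matrix m n R} (hZ : Z ≠ 0) :
    B * Z ≠ 0 := by
  simpa using (mul_right_injective_iff_mulVec_injective.2 hB).ne hZ

theorem frobenius_norm_mul_pos [Nonempty n] {B : Matrix l m 𝕜} (hB : Function.Injective B.mulVec)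
    {Z : Matrix m n 𝕜} (hZ : Z ≠ 0) : 0 < ‖B * Z‖ :=
  norm_pos_iff.2 (mul_ne_zero_of_mulVec_injective hB hZ)

/-- The real inner product `⟪X, Y⟫ = re (tr (Xᴴ Y))` inducing the Frobenius norm. It is real, also
for complex matrices, because it serves to differentiate along curves parametrized by `ℝ`. -/
noncomputable abbrev frobeniusRealInnerProductSpace : InnerProductSpace ℝ (Matrix m n 𝕜) where
  inner X Y := RCLike.re (Xᴴ * Y).trace
  norm_sq_eq_re_inner X := by
    simp [trace_conjTranspose_mul_self_eq_frobenius_norm_sq]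
  conj_inner_symm X Y := by
    rw [← conjTranspose_conjTranspose X, ← conjTranspose_mul, trace_conjTranspose]
    simp
  add_left X Y Z := by simp [Matrix.add_mul]
  smul_left X Y r := by simp [RCLike.smul_re]

attribute [local instance] frobeniusRealInnerProductSpace

open scoped RealInnerProductSpace

theorem frobenius_inner_def (X Y : Matrix m n 𝕜) : ⟪X, Y⟫ = RCLike.re (Xᴴ * Y).trace := rfl

theorem frobenius_inner_mul_right (X : Matrix l n 𝕜) (B : Matrix l m 𝕜) (Y : Matrix m n 𝕜) :
    ⟪X, B * Y⟫ = ⟪Bᴴ * X, Y⟫ := by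
  simp only [frobenius_inner_def, conjTranspose_mul, conjTranspose_conjTranspose, Matrix.mul_assoc]

theorem frobenius_inner_one_left [DecidableEq n] (X : Matrix n n 𝕜) :
    ⟪1, X⟫ = RCLike.re X.trace := by
  rw [frobenius_inner_def, conjTranspose_one, Matrix.one_mul]

end FrobeniusInner

section Derivatives

open scoped RealInnerProductSpace

theorem hasDerivAt_log_norm {E : Type*} [NormedAddCommGroup E] [InnerProductSpace ℝ E]
    {f : ℝ → E} {f' : E} {t : ℝ} (hf : HasDerivAt f f' t) (hft : f t ≠ 0) :
    HasDerivAt (fun s => Real.log ‖f s‖) (⟪f t, f'⟫ / ‖f t‖ ^ 2) t := by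
  have half_log_sq : (fun s => Real.log ‖f s‖) = fun s => Real.log (‖f s‖ ^ 2) / 2 := by
    funext s
    rw [Real.log_pow]
    push_cast
    ring
  rw [half_log_sq]
  refine ((hf.norm_sq.log (pow_ne_zero 2 (norm_ne_zero_iff.2 hft))).div_const 2).congr_deriv ?_
  ring

theorem eventually_isUnit_mul_one_add_smul {R : Type*} [NormedRing R] [NormedAlgebra ℝ R]
    [HasSummableGeomSeries R] {z : R} (hz : IsUnit z) (h : R) :
    ∀ᶠ t : ℝ in nhds 0, IsUnit (z * (1 + t • h)) := by
  have curve_continuous : Continuous fun t : ℝ => z * (1 + t • h) := by fun_prop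
  exact curve_continuous.continuousAt.eventually (Units.isOpen.mem_nhds (by simpa using hz))

theorem hasDerivAt_det_one_add_smul_s13 {𝕜 n : Type*} [NontriviallyNormedField 𝕜] [Fintype n]
    [DecidableEq n] (H : Matrix n n 𝕜) :
    HasDerivAt (fun t : 𝕜 => (1 + t • H).det) H.trace 0 := by
  have eval_eq (t : 𝕜) : (1 + t • H).det =
      (det (1 + (Polynomial.X : Polynomial 𝕜) • H.map Polynomial.C)).eval t := by
    simp [eval_det, ← smul_eq_mul_diagonal]
  simp only [eval_eq, ← derivative_det_one_add_X_smul H]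
  exact Polynomial.hasDerivAt _ 0

variable {𝕜 l m n : Type*} [RCLike 𝕜] [Fintype l] [Fintype m] [Fintype n] [DecidableEq n]

theorem hasDerivAt_det_mul_one_add_real_smul (Z H : Matrix n n 𝕜) :
    HasDerivAt (fun t : ℝ => (Z * (1 + t • H)).det) (Z.det * H.trace) 0 := by
  have hasDerivAt_ofReal : HasDerivAt (fun t : ℝ => (t : 𝕜)) 1 0 := by
    simpa using (RCLike.ofRealCLM (K := 𝕜)).hasDerivAt (x := 0)
  have hasDerivAt_real : HasDerivAt (fun t : ℝ => (1 + (t : 𝕜) • H).det) H.trace 0 := by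
    simpa [Function.comp_def] using
      (hasDerivAt_det_one_add_smul_s13 H).scomp_of_eq (0 : ℝ) hasDerivAt_ofReal RCLike.ofReal_zero.symm
  simpa [det_mul] using hasDerivAt_real.const_mul Z.det

theorem hasDerivAt_log_norm_det_mul_one_add_smul {Z : Matrix n n 𝕜} (hZ : IsUnit Z)
    (H : Matrix n n 𝕜) :
    HasDerivAt (fun t : ℝ => Real.log ‖(Z * (1 + t • H)).det‖) (RCLike.re H.trace) 0 := by
  have hdet : Z.det ≠ 0 := ((isUnit_iff_isUnit_det Z).1 hZ).ne_zero
  have inner_eq : ⟪Z.det, Z.det * H.trace⟫ = ‖Z.det‖ ^ 2 * RCLike.re H.trace := by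
    calc ⟪Z.det, Z.det * H.trace⟫ = RCLike.re (Z.det * H.trace * star Z.det) := rfl
      _ = ‖Z.det‖ ^ 2 * RCLike.re H.trace := by
        rw [mul_right_comm, RCLike.star_def, RCLike.mul_conj, ← RCLike.ofReal_pow,
          RCLike.re_ofReal_mul]
  refine (hasDerivAt_log_norm (hasDerivAt_det_mul_one_add_real_smul Z H)
    (by simpa using hdet)).congr_deriv ?_
  simp only [zero_smul, add_zero, Matrix.mul_one, inner_eq]
  field_simp

open scoped Matrix.Norms.Frobenius

attribute [local instance] frobeniusRealInnerProductSpace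

theorem hasDerivAt_log_frobenius_norm_mul_one_add_smul {B : Matrix m n 𝕜} (hB : B ≠ 0)
    (H : Matrix n n 𝕜) :
    HasDerivAt (fun t : ℝ => Real.log ‖B * (1 + t • H)‖) (⟪Bᴴ * B, H⟫ / ‖B‖ ^ 2) 0 := by
  have curve : HasDerivAt (fun t : ℝ => B + t • (B * H)) (B * H) 0 := by
    have hasDerivAt_smul := (hasDerivAt_id' (0 : ℝ)).smul_const (B * H)
    rw [one_smul] at hasDerivAt_smul
    exact hasDerivAt_smul.const_add B
  simpa [Matrix.mul_add, frobenius_inner_mul_right] using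
    hasDerivAt_log_norm curve (by simpa using hB)

end Derivatives

section NormalizedDet

open scoped Matrix.Norms.Frobenius

variable {𝕜 ι n : Type*} {m : ι → Type*} [RCLike 𝕜] [Fintype ι] [Fintype n]
  [∀ i, Fintype (m i)] {A : ∀ i, Matrix (m i) n 𝕜} {w : ι → ℝ}

theorem prod_frobenius_norm_mul_rpow_pos [Nonempty n]
    (hA : ∀ i, Function.Injective (A i).mulVec) {Z : Matrix n n 𝕜} (hZ : Z ≠ 0) :
    0 < ∏ i, ‖A i * Z‖ ^ w i :=
  Finset.prod_pos fun i _ => Real.rpow_pos_of_pos (frobenius_norm_mul_pos (hA i) hZ) _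

variable [DecidableEq n]

/-- The functional `‖det Z‖ / ∏ᵢ ‖Aᵢ Z‖ ^ wᵢ`, maximized to solve the scaling problem for the family
`A` with weights `w`. -/
noncomputable def normalizedDet (A : ∀ i, Matrix (m i) n 𝕜) (w : ι → ℝ) (Z : Matrix n n 𝕜) : ℝ :=
  ‖Z.det‖ / ∏ i, ‖A i * Z‖ ^ w i

theorem normalizedDet_smul (hw : ∑ i, w i = Fintype.card n) {c : ℝ} (hc : c ≠ 0)
    (Z : Matrix n n 𝕜) : normalizedDet A w (c • Z) = normalizedDet A w Z := by
  have hc' : 0 < ‖c‖ := norm_pos_iff.2 hc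
  have prod_smul : ∏ i, ‖A i * c • Z‖ ^ w i = ‖c‖ ^ Fintype.card n * ∏ i, ‖A i * Z‖ ^ w i := by
    simp only [Matrix.mul_smul, norm_smul, Real.mul_rpow (norm_nonneg _) (norm_nonneg _),
      Finset.prod_mul_distrib, ← Real.rpow_sum_of_pos hc', hw, Real.rpow_natCast]
  have det_smul_real : ‖(c • Z).det‖ = ‖c‖ ^ Fintype.card n * ‖Z.det‖ := by
    rw [← algebraMap_smul 𝕜 c Z, det_smul, norm_mul, norm_pow, norm_algebraMap']
  rw [normalizedDet, prod_smul, det_smul_real, mul_div_mul_left _ _ (pow_ne_zero _ hc'.ne'),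
    normalizedDet]

theorem isUnit_of_normalizedDet_ne_zero {Z : Matrix n n 𝕜} (hZ : normalizedDet A w Z ≠ 0) :
    IsUnit Z := by
  rw [isUnit_iff_isUnit_det, isUnit_iff_ne_zero]
  contrapose! hZ
  rw [normalizedDet, hZ, norm_zero, zero_div]

variable [Nonempty n]

theorem normalizedDet_pos (hA : ∀ i, Function.Injective (A i).mulVec) {Z : Matrix n n 𝕜}
    (hZ : IsUnit Z) : 0 < normalizedDet A w Z :=
  div_pos (norm_pos_iff.2 ((isUnit_iff_isUnit_det Z).1 hZ).ne_zero)
    (prod_frobenius_norm_mul_rpow_pos hA hZ.ne_zero)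

theorem continuousOn_normalizedDet (hA : ∀ i, Function.Injective (A i).mulVec) :
    ContinuousOn (normalizedDet A w) {0}ᶜ := by
  refine ContinuousOn.div (by fun_prop) ?_ fun Z hZ => ?_
  · refine continuousOn_finsetProd _ fun i _ => ?_
    exact ContinuousOn.rpow_const (by fun_prop) fun Z hZ =>
      .inl (frobenius_norm_mul_pos (hA i) hZ).ne'
  · exact (prod_frobenius_norm_mul_rpow_pos hA hZ).ne'

theorem exists_isUnit_forall_normalizedDet_le (hA : ∀ i, Function.Injective (A i).mulVec)
    (hw : ∑ i, w i = Fintype.card n) :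
    ∃ Z : Matrix n n 𝕜, IsUnit Z ∧ ∀ W, W ≠ 0 → normalizedDet A w W ≤ normalizedDet A w Z := by
  have : ProperSpace (Matrix n n 𝕜) := FiniteDimensional.proper ℝ _
  obtain ⟨Z, -, hmax⟩ := (isCompact_sphere (0 : Matrix n n 𝕜) 1).exists_isMaxOn
    (NormedSpace.sphere_nonempty.2 zero_le_one)
    ((continuousOn_normalizedDet (w := w) hA).mono fun Z hZ => ne_zero_of_mem_unit_sphere ⟨Z, hZ⟩)
  have le_of_ne_zero (W : Matrix n n 𝕜) (hW : W ≠ 0) :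
      normalizedDet A w W ≤ normalizedDet A w Z := by
    rw [← normalizedDet_smul hw (inv_ne_zero (norm_ne_zero_iff.2 hW)) W]
    exact hmax (by simp [norm_smul, hW])
  exact ⟨Z, isUnit_of_normalizedDet_ne_zero
    ((normalizedDet_pos hA isUnit_one).trans_le (le_of_ne_zero 1 one_ne_zero)).ne', le_of_ne_zero⟩

theorem log_normalizedDet (hA : ∀ i, Function.Injective (A i).mulVec) {Z : Matrix n n 𝕜}
    (hZ : IsUnit Z) : Real.log (normalizedDet A w Z) =
      Real.log ‖Z.det‖ - ∑ i, w i * Real.log ‖A i * Z‖ := by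
  have norm_pos i := frobenius_norm_mul_pos (hA i) hZ.ne_zero
  have rpow_ne_zero i : ‖A i * Z‖ ^ w i ≠ 0 := (Real.rpow_pos_of_pos (norm_pos i) _).ne'
  rw [normalizedDet, Real.log_div (norm_ne_zero_iff.2 ((isUnit_iff_isUnit_det Z).1 hZ).ne_zero)
    (Finset.prod_ne_zero_iff.2 fun i _ => rpow_ne_zero i), Real.log_prod fun i _ => rpow_ne_zero i]
  simp only [Real.log_rpow (norm_pos _)]

open scoped RealInnerProductSpace

attribute [local instance] frobeniusRealInnerProductSpace

theorem hasDerivAt_log_normalizedDet_mul_one_add_smul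
    (hA : ∀ i, Function.Injective (A i).mulVec) {Z : Matrix n n 𝕜} (hZ : IsUnit Z)
    (H : Matrix n n 𝕜) :
    HasDerivAt (fun t : ℝ => Real.log (normalizedDet A w (Z * (1 + t • H))))
      ⟪1 - ∑ i, (w i / ‖A i * Z‖ ^ 2) • ((A i * Z)ᴴ * (A i * Z)), H⟫ 0 := by
  have log_eventuallyEq : (fun t : ℝ => Real.log (normalizedDet A w (Z * (1 + t • H)))) =ᶠ[nhds 0]
      fun t => Real.log ‖(Z * (1 + t • H)).det‖ -
        ∑ i, w i * Real.log ‖A i * Z * (1 + t • H)‖ := by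
    filter_upwards [eventually_isUnit_mul_one_add_smul hZ H] with t ht
    simp only [log_normalizedDet hA ht, Matrix.mul_assoc]
  have deriv_norm i := hasDerivAt_log_frobenius_norm_mul_one_add_smul
    (mul_ne_zero_of_mulVec_injective (hA i) hZ.ne_zero) H
  refine (((hasDerivAt_log_norm_det_mul_one_add_smul hZ H).sub (HasDerivAt.fun_sum fun i _ =>
    (deriv_norm i).const_mul (w i))).congr_of_eventuallyEq log_eventuallyEq).congr_deriv ?_
  simp only [inner_sub_left, sum_inner, real_inner_smul_left, frobenius_inner_one_left]
  congr! 2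
  ring

theorem sum_smul_conjTranspose_mul_self_eq_one_of_forall_normalizedDet_le
    (hA : ∀ i, Function.Injective (A i).mulVec) {Z : Matrix n n 𝕜} (hZ : IsUnit Z)
    (hmax : ∀ W, IsUnit W → normalizedDet A w W ≤ normalizedDet A w Z) :
    ∑ i, (w i / ‖A i * Z‖ ^ 2) • ((A i * Z)ᴴ * (A i * Z)) = 1 := by
  refine (sub_eq_zero.1 (ext_inner_right ℝ fun H => ?_)).symm
  have isLocalMax : IsLocalMax
      (fun t : ℝ => Real.log (normalizedDet A w (Z * (1 + t • H)))) 0 := by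
    filter_upwards [eventually_isUnit_mul_one_add_smul hZ H] with t ht
    simpa using Real.log_le_log (normalizedDet_pos hA ht) (hmax _ ht)
  rw [inner_zero_left]
  exact isLocalMax.hasDerivAt_eq_zero (hasDerivAt_log_normalizedDet_mul_one_add_smul hA hZ H)

end NormalizedDet

open scoped Matrix.Norms.Frobenius in
theorem stmt_13_general {𝕜 ι n : Type*} {m : ι → Type*} [RCLike 𝕜] [Fintype ι] [Fintype n]
    [DecidableEq n] [Nonempty n] [∀ i, Fintype (m i)] (A : ∀ i, Matrix (m i) n 𝕜) (w : ι → ℝ)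
    (hA : ∀ i, Function.Injective (A i).mulVec) (hw : ∑ i, w i = Fintype.card n) :
    ∃ Z : Matrix n n 𝕜, IsUnit Z ∧
      (∀ i, ((‖A i * Z‖ ^ 2)⁻¹ • ((A i * Z)ᴴ * (A i * Z))).trace = 1) ∧
      ∑ i, (w i / ‖A i * Z‖ ^ 2) • ((A i * Z)ᴴ * (A i * Z)) = 1 := by
  obtain ⟨Z, hZ, hmax⟩ := exists_isUnit_forall_normalizedDet_le hA hw
  refine ⟨Z, hZ, fun i => ?_,
    sum_smul_conjTranspose_mul_self_eq_one_of_forall_normalizedDet_le hA hZ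
      fun W hW => hmax W hW.ne_zero⟩
  have norm_sq_ne_zero : ‖A i * Z‖ ^ 2 ≠ 0 :=
    pow_ne_zero 2 (frobenius_norm_mul_pos (hA i) hZ.ne_zero).ne'
  rw [trace_smul, trace_conjTranspose_mul_self_eq_frobenius_norm_sq, RCLike.real_smul_ofReal,
    ← RCLike.ofReal_mul, inv_mul_cancel₀ norm_sq_ne_zero, RCLike.ofReal_one]

/-- For invertible `n×n` real matrices `A₁, …, Aₙ` there is an invertible
matrix `Z` with
`∑ᵢ (1/‖AᵢZ‖_F²) Zᵀ Aᵢᵀ Aᵢ Z = I`, each summand having trace `1`.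
Here `‖AᵢZ‖_F² = Trace((AᵢZ)ᵀ (AᵢZ))` is the squared Frobenius norm. -/
theorem stmt_13 (n : ℕ) (A : Fin n → Matrix (Fin n) (Fin n) ℝ)
    (hA : ∀ i, IsUnit (A i)) :
    ∃ Z : Matrix (Fin n) (Fin n) ℝ, IsUnit Z ∧
      (∀ i, ((((A i * Z)ᵀ * (A i * Z)).trace)⁻¹ •
          (Zᵀ * (A i)ᵀ * A i * Z)).trace = 1) ∧
      ∑ i, (((A i * Z)ᵀ * (A i * Z)).trace)⁻¹ • (Zᵀ * (A i)ᵀ * A i * Z) =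
        (1 : Matrix (Fin n) (Fin n) ℝ) := by
  rcases n with _ | n
  · exact ⟨1, isUnit_one, (·.elim0), Subsingleton.elim _ _⟩
  · have gram_eq i (Z : Matrix (Fin (n + 1)) (Fin (n + 1)) ℝ) :
        Zᵀ * (A i)ᵀ * A i * Z = (A i * Z)ᵀ * (A i * Z) := by
      rw [transpose_mul, Matrix.mul_assoc _ (A i) Z]
    simpa only [gram_eq, trace_transpose_mul_self_eq_frobenius_norm_sq,
      conjTranspose_eq_transpose_of_trivial, one_div] using
      stmt_13_general A (fun _ => 1) (fun i => mulVec_injective_of_isUnit (hA i)) (by simp)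
end

section
/- Let X be an n×n random matrix whose entries are independent standard Gaussian random variables N(0,1). Then the expected absolute determinant of X equals 2^{n/2} Γ((n+1)/2) / √π; that is, the integral of |det M| over the space of n×n real matrices M with respect to the product of n² standard Gaussian measures equals 2^{n/2} Γ((n+1)/2) / √π. -/
open Matrix MeasureTheory ProbabilityTheory

/-!
Expose the first row `v` of a Gaussian matrix. By rotation invariance the remaining rows may be
rotated by an isometry taking `v` to `‖v‖ e₀`, which does not change `|det|`; expanding along the
first row, `|det|` has the law of `‖v‖` times the absolute determinant of a Gaussian matrix of size
one less. Hence `E|det|^p` is a product of the `p`-th moments of the norms of standard Gaussian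
vectors in dimensions `1, …, n`, and for `p = 1` the product telescopes.
-/

open Module
open scoped ENNReal

section StdGaussian

variable {E : Type*} [NormedAddCommGroup E] [InnerProductSpace ℝ E] [FiniteDimensional ℝ E]
  [MeasurableSpace E] [BorelSpace E]

theorem stdGaussian_eq_withDensity :
    stdGaussian E = volume.withDensity fun x : E =>
      ENNReal.ofReal ((√(2 * Real.pi))⁻¹ ^ finrank ℝ E * Real.exp (-(1 / 2) * ‖x‖ ^ 2)) := by
  have hint : Integrable fun x : E =>
      (√(2 * Real.pi))⁻¹ ^ finrank ℝ E * Real.exp (-(1 / 2) * ‖x‖ ^ 2) := by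
    refine Integrable.const_mul (.of_integral_ne_zero ?_) _
    rw [GaussianFourier.integral_rexp_neg_mul_sq_norm (by norm_num)]
    positivity
  have := isFiniteMeasure_withDensity_ofReal hint.2
  refine Measure.ext_of_charFun (funext fun t => ?_)
  rw [charFun_stdGaussian, charFun_apply,
    integral_withDensity_eq_integral_toReal_smul (by fun_prop) (by simp)]
  have hint_eq (x : E) : (ENNReal.ofReal ((√(2 * Real.pi))⁻¹ ^ finrank ℝ E *
      Real.exp (-(1 / 2) * ‖x‖ ^ 2))).toReal • Complex.exp (inner ℝ x t * Complex.I) =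
      ((√(2 * Real.pi))⁻¹ ^ finrank ℝ E : ℝ) *
        Complex.exp (-(1 / 2 : ℂ) * ‖x‖ ^ 2 + Complex.I * inner ℝ t x) := by
    rw [ENNReal.toReal_ofReal (by positivity), Complex.real_smul, Complex.exp_add,
      real_inner_comm, mul_comm Complex.I]
    push_cast
    ring
  simp_rw [hint_eq]
  rw [integral_const_mul, GaussianFourier.integral_cexp_neg_mul_sq_norm_add (by norm_num)]
  have hconst : ((√(2 * Real.pi))⁻¹ ^ finrank ℝ E : ℝ) *
      ((Real.pi / (1 / 2 : ℂ)) ^ (finrank ℝ E / 2 : ℂ)) = 1 := by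
    have : (Real.pi / (1 / 2 : ℂ)) = ((2 * Real.pi : ℝ) : ℂ) := by push_cast; ring
    rw [this, ← Complex.ofReal_natCast, ← Complex.ofReal_ofNat, ← Complex.ofReal_div,
      ← Complex.ofReal_cpow (by positivity), ← Complex.ofReal_mul,
      Real.rpow_div_two_eq_sqrt _ (by positivity), Real.rpow_natCast, ← mul_pow,
      inv_mul_cancel₀ (by positivity), one_pow, Complex.ofReal_one]
  rw [← mul_assoc, hconst, one_mul, Complex.I_sq]
  congr 1
  ring

theorem integral_fun_norm_stdGaussian [Nontrivial E] (g : ℝ → ℝ) :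
    ∫ x, g ‖x‖ ∂stdGaussian E =
      2 ^ (1 - finrank ℝ E / 2 : ℝ) / Real.Gamma (finrank ℝ E / 2) *
        ∫ r in Set.Ioi (0 : ℝ), r ^ (finrank ℝ E - 1) * (Real.exp (-(1 / 2) * r ^ 2) * g r) := by
  have hd : 0 < finrank ℝ E := finrank_pos
  rw [stdGaussian_eq_withDensity,
    integral_withDensity_eq_integral_toReal_smul (by fun_prop) (by simp)]
  have hdens (x : E) : (ENNReal.ofReal ((√(2 * Real.pi))⁻¹ ^ finrank ℝ E *
      Real.exp (-(1 / 2) * ‖x‖ ^ 2))).toReal • g ‖x‖ =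
      (√(2 * Real.pi))⁻¹ ^ finrank ℝ E * (Real.exp (-(1 / 2) * ‖x‖ ^ 2) * g ‖x‖) := by
    rw [ENNReal.toReal_ofReal (by positivity), smul_eq_mul, mul_assoc]
  simp_rw [hdens]
  rw [integral_const_mul,
    integral_fun_norm_addHaar volume fun r => Real.exp (-(1 / 2) * r ^ 2) * g r]
  have hball : (volume : Measure E).real (Metric.ball 0 1) =
      √Real.pi ^ finrank ℝ E / (finrank ℝ E / 2 * Real.Gamma (finrank ℝ E / 2)) := by
    rw [measureReal_def, InnerProductSpace.volume_ball, Real.Gamma_add_one (by positivity)]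
    simp only [ENNReal.ofReal_one, one_pow, one_mul]
    exact ENNReal.toReal_ofReal (by positivity)
  have htwo : (2 : ℝ) ^ (1 - finrank ℝ E / 2 : ℝ) = 2 / √2 ^ finrank ℝ E := by
    rw [Real.rpow_sub two_pos, Real.rpow_one, Real.rpow_div_two_eq_sqrt _ zero_le_two,
      Real.rpow_natCast]
  simp only [hball, htwo, nsmul_eq_mul, smul_eq_mul, Real.sqrt_mul zero_le_two, inv_pow, mul_pow]
  field_simp

theorem integral_norm_rpow_stdGaussian [Nontrivial E] {p : ℝ} (hp : -finrank ℝ E < p) :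
    ∫ x, ‖x‖ ^ p ∂stdGaussian E =
      2 ^ (p / 2) * Real.Gamma ((finrank ℝ E + p) / 2) / Real.Gamma (finrank ℝ E / 2) := by
  have hradial : ∫ r in Set.Ioi (0 : ℝ),
      r ^ (finrank ℝ E - 1) * (Real.exp (-(1 / 2) * r ^ 2) * r ^ p) =
      ∫ r in Set.Ioi (0 : ℝ), r ^ (finrank ℝ E - 1 + p) * Real.exp (-(1 / 2) * r ^ (2 : ℝ)) := by
    refine setIntegral_congr_fun measurableSet_Ioi fun r (hr : 0 < r) => ?_
    rw [Real.rpow_add hr, ← Nat.cast_pred finrank_pos, Real.rpow_natCast, Real.rpow_two]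
    ring
  rw [integral_fun_norm_stdGaussian (· ^ p), hradial,
    integral_rpow_mul_exp_neg_mul_rpow two_pos (by linarith) one_half_pos]
  have hexp : (2 : ℝ) ^ (1 - finrank ℝ E / 2 : ℝ) * (1 / 2) ^ (-(finrank ℝ E + p) / 2) =
      2 * 2 ^ (p / 2) := by
    rw [one_div, Real.inv_rpow zero_le_two, ← Real.rpow_neg zero_le_two, ← Real.rpow_add two_pos,
      show (1 - finrank ℝ E / 2 + -(-(finrank ℝ E + p) / 2) : ℝ) = 1 + p / 2 by ring,
      Real.rpow_add two_pos, Real.rpow_one]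
  rw [show (finrank ℝ E - 1 + p + 1 : ℝ) = finrank ℝ E + p by ring]
  linear_combination
    (Real.Gamma ((finrank ℝ E + p) / 2) / (2 * Real.Gamma (finrank ℝ E / 2))) * hexp

end StdGaussian

/-- The law of a family of independent standard Gaussian vectors indexed by `ι`, used as the rows of
a Gaussian matrix. The rows live in `EuclideanSpace` so that linear isometries act on them. -/
noncomputable abbrev gaussianRows (ι κ : Type*) [Fintype ι] [Fintype κ] :
    Measure (ι → EuclideanSpace ℝ κ) :=
  Measure.pi fun _ => stdGaussian (EuclideanSpace ℝ κ)

theorem measurePreserving_toLp_stdGaussian {ι : Type*} [Fintype ι] :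
    MeasurePreserving (WithLp.toLp 2) (Measure.pi fun _ : ι => gaussianReal 0 1)
      (stdGaussian (EuclideanSpace ℝ ι)) :=
  ⟨by fun_prop, map_pi_eq_stdGaussian⟩

theorem measurePreserving_rows_stdGaussian (ι κ : Type*) [Fintype ι] [Fintype κ] :
    MeasurePreserving (fun (f : ι × κ → ℝ) i => WithLp.toLp 2 fun j => f (i, j))
      (Measure.pi fun _ => gaussianReal 0 1) (gaussianRows ι κ) := by
  have hcurry : MeasurePreserving (MeasurableEquiv.curry ι κ ℝ)
      (Measure.pi fun _ => gaussianReal 0 1)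
      (Measure.pi fun _ : ι => Measure.pi fun _ : κ => gaussianReal 0 1) := by
    refine ⟨by fun_prop, ?_⟩
    simpa only [Measure.infinitePi_eq_pi] using
      Measure.infinitePi_map_curry fun (_ : ι) (_ : κ) => gaussianReal 0 1
  exact (measurePreserving_pi _ _ fun _ => measurePreserving_toLp_stdGaussian).comp hcurry

theorem measurePreserving_tail_stdGaussian (n : ℕ) :
    MeasurePreserving (fun x : EuclideanSpace ℝ (Fin (n + 1)) => WithLp.toLp 2 (Fin.tail x.ofLp))
      (stdGaussian (EuclideanSpace ℝ (Fin (n + 1)))) (stdGaussian (EuclideanSpace ℝ (Fin n))) := by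
  have htail : MeasurePreserving (Fin.tail (α := fun _ => ℝ))
      (Measure.pi fun _ : Fin (n + 1) => gaussianReal 0 1)
      (Measure.pi fun _ : Fin n => gaussianReal 0 1) :=
    measurePreserving_snd.comp (measurePreserving_piFinSuccAbove (fun _ => gaussianReal 0 1) 0)
  have hmeas : Measurable fun x : EuclideanSpace ℝ (Fin (n + 1)) =>
      WithLp.toLp 2 (Fin.tail x.ofLp) := by unfold Fin.tail; fun_prop
  refine ⟨hmeas, ?_⟩
  rw [← measurePreserving_toLp_stdGaussian.map_eq, Measure.map_map hmeas (by fun_prop)]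
  exact (measurePreserving_toLp_stdGaussian.comp htail).map_eq

theorem lintegral_pi_fin_succ {α : Type*} [MeasurableSpace α] {n : ℕ}
    (μ : Fin (n + 1) → Measure α) [∀ i, SigmaFinite (μ i)]
    {F : (Fin (n + 1) → α) → ℝ≥0∞} (hF : Measurable F) :
    ∫⁻ x, F x ∂Measure.pi μ =
      ∫⁻ a, ∫⁻ y, F (vecCons a y) ∂(Measure.pi fun i : Fin n => μ i.succ) ∂μ 0 := by
  have hcons : MeasurePreserving (fun z : α × (Fin n → α) => vecCons z.1 z.2)
      ((μ 0).prod (Measure.pi fun i : Fin n => μ i.succ)) (Measure.pi μ) := by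
    convert (measurePreserving_piFinSuccAbove μ 0).symm using 1
    · ext z i
      cases i using Fin.cases <;> simp [Fin.insertNthEquiv]
    · simp only [Fin.succAbove_zero]
  exact (hcons.lintegral_comp hF).symm.trans
    (lintegral_prod _ (hF.comp hcons.measurable).aemeasurable)

theorem exists_linearIsometryEquiv_apply_eq {F : Type*} [NormedAddCommGroup F]
    [InnerProductSpace ℝ F] {v w : F} (h : ‖v‖ = ‖w‖) : ∃ R : F ≃ₗᵢ[ℝ] F, R v = w :=
  ⟨(Submodule.span ℝ {v - w})ᗮ.reflection, Submodule.reflection_sub h⟩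

theorem abs_det_of_linearIsometry_apply {ι : Type*} [Fintype ι] [DecidableEq ι]
    (R : EuclideanSpace ℝ ι →ₗᵢ[ℝ] EuclideanSpace ℝ ι) (Y : ι → EuclideanSpace ℝ ι) :
    |(of fun i j => R (Y i) j).det| = |(of fun i j => Y i j).det| := by
  have hdet (Z : ι → EuclideanSpace ℝ ι) :
      (EuclideanSpace.basisFun ι ℝ).toBasis.det Z = (of fun i j => Z i j).det := by
    rw [Basis.det_apply, ← det_transpose]
    rfl
  have hR : |LinearMap.det R.toLinearMap| = 1 := by
    rw [← LinearMap.normDet_eq_abs_det, R.normDet_eq_one]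
  have hcomp := (EuclideanSpace.basisFun ι ℝ).toBasis.det_comp R.toLinearMap Y
  rw [hdet, hdet] at hcomp
  calc
    _ = |LinearMap.det R.toLinearMap * (of fun i j => Y i j).det| := congrArg abs hcomp
    _ = _ := by rw [abs_mul, hR, one_mul]

theorem det_of_vecCons_single_zero {S : Type*} [CommRing S] {n : ℕ} (r : S)
    (A : Fin n → Fin (n + 1) → S) :
    (of (vecCons (Pi.single 0 r) A)).det = r * (of fun i j => A i (Fin.succ j)).det := by
  rw [det_succ_row_zero, Fin.sum_univ_succ]
  simp only [of_apply, cons_val_zero, Pi.single_eq_same, Fin.val_zero, pow_zero, one_mul,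
    Fin.succAbove_zero, Pi.single_eq_of_ne (Fin.succ_ne_zero _), mul_zero, zero_mul,
    Finset.sum_const_zero, add_zero]
  rfl

theorem measurable_det_of_rows {ι : Type*} [Fintype ι] [DecidableEq ι] :
    Measurable fun Y : ι → EuclideanSpace ℝ ι => (of fun i j => Y i j).det :=
  (Continuous.matrix_det (by fun_prop)).measurable

theorem measurable_abs_det_rpow {ι : Type*} [Fintype ι] [DecidableEq ι] (p : ℝ) :
    Measurable fun Y : ι → EuclideanSpace ℝ ι => |(of fun i j => Y i j).det| ^ p :=
  measurable_det_of_rows.abs.pow_const p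

theorem lintegral_abs_det_vecCons {n : ℕ} {φ : ℝ → ℝ≥0∞} (hφ : Measurable φ)
    (v : EuclideanSpace ℝ (Fin (n + 1))) :
    ∫⁻ Y, φ |(of fun i j => vecCons v Y i j).det| ∂gaussianRows (Fin n) (Fin (n + 1)) =
      ∫⁻ Z, φ (‖v‖ * |(of fun i j => Z i j).det|) ∂gaussianRows (Fin n) (Fin n) := by
  obtain ⟨R, hR⟩ : ∃ R : EuclideanSpace ℝ (Fin (n + 1)) ≃ₗᵢ[ℝ] EuclideanSpace ℝ (Fin (n + 1)),
      R v = EuclideanSpace.single 0 ‖v‖ := exists_linearIsometryEquiv_apply_eq (by simp)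
  have hdet (Y : Fin n → EuclideanSpace ℝ (Fin (n + 1))) :
      |(of fun i j => vecCons v Y i j).det| =
        ‖v‖ * |(of fun i j => Fin.tail (R (Y i)).ofLp j).det| := by
    have hrow : (fun i => (R (vecCons v Y i)).ofLp) =
        vecCons (Pi.single 0 ‖v‖) fun i => (R (Y i)).ofLp :=
      funext (Fin.cases (congrArg WithLp.ofLp hR) fun _ => rfl)
    calc
      _ = |(of fun i => (R (vecCons v Y i)).ofLp).det| :=
        (abs_det_of_linearIsometry_apply R.toLinearIsometry _).symm
      _ = _ := by
        rw [hrow, det_of_vecCons_single_zero, abs_mul, abs_norm]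
        rfl
  have hrows : MeasurePreserving
      (fun (Y : Fin n → EuclideanSpace ℝ (Fin (n + 1))) i =>
        WithLp.toLp 2 (Fin.tail (R (Y i)).ofLp))
      (gaussianRows (Fin n) (Fin (n + 1))) (gaussianRows (Fin n) (Fin n)) :=
    measurePreserving_pi _ _ fun _ =>
      (measurePreserving_tail_stdGaussian n).comp ⟨by fun_prop, stdGaussian_map R⟩
  simp_rw [hdet]
  exact hrows.lintegral_comp (hφ.comp (measurable_det_of_rows.abs.const_mul ‖v‖))

theorem lintegral_abs_det_rpow_succ (p : ℝ) (n : ℕ) :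
    ∫⁻ Y, ENNReal.ofReal (|(of fun i j => Y i j).det| ^ p)
        ∂gaussianRows (Fin (n + 1)) (Fin (n + 1)) =
      (∫⁻ v, ENNReal.ofReal (‖v‖ ^ p) ∂stdGaussian (EuclideanSpace ℝ (Fin (n + 1)))) *
      ∫⁻ Z, ENNReal.ofReal (|(of fun i j => Z i j).det| ^ p) ∂gaussianRows (Fin n) (Fin n) := by
  rw [lintegral_pi_fin_succ _ (measurable_abs_det_rpow p).ennreal_ofReal,
    ← lintegral_mul_const _ (by fun_prop)]
  refine lintegral_congr fun v => ?_
  rw [lintegral_abs_det_vecCons (φ := fun t => ENNReal.ofReal (t ^ p)) (by fun_prop),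
    ← lintegral_const_mul _ (measurable_abs_det_rpow p).ennreal_ofReal]
  refine lintegral_congr fun Z => ?_
  rw [Real.mul_rpow (norm_nonneg v) (abs_nonneg _), ENNReal.ofReal_mul (by positivity)]

theorem lintegral_abs_det_rpow (p : ℝ) (n : ℕ) :
    ∫⁻ Y, ENNReal.ofReal (|(of fun i j => Y i j).det| ^ p) ∂gaussianRows (Fin n) (Fin n) =
      ∏ k ∈ Finset.range n,
        ∫⁻ v, ENNReal.ofReal (‖v‖ ^ p) ∂stdGaussian (EuclideanSpace ℝ (Fin (k + 1))) := by
  induction n with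
  | zero => simp
  | succ n ih => rw [lintegral_abs_det_rpow_succ, ih, Finset.prod_range_succ_comm]

theorem integral_abs_det_rpow_pi_gaussianReal {p : ℝ} (hp : -1 < p) (n : ℕ) :
    ∫ f : Fin n × Fin n → ℝ, |(of fun i j => f (i, j)).det| ^ p
        ∂(Measure.pi fun _ => gaussianReal 0 1) =
      ∏ k ∈ Finset.range n,
        2 ^ (p / 2) * Real.Gamma ((k + 1 + p) / 2) / Real.Gamma ((k + 1) / 2) := by
  have hrows := measurePreserving_rows_stdGaussian (Fin n) (Fin n)
  have hnorm (k : ℕ) :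
      (∫⁻ v, ENNReal.ofReal (‖v‖ ^ p) ∂stdGaussian (EuclideanSpace ℝ (Fin (k + 1)))).toReal =
        2 ^ (p / 2) * Real.Gamma ((k + 1 + p) / 2) / Real.Gamma ((k + 1) / 2) := by
    have hk : -(finrank ℝ (EuclideanSpace ℝ (Fin (k + 1))) : ℝ) < p := by
      rw [finrank_euclideanSpace_fin]
      push_cast
      linarith [k.cast_nonneg (α := ℝ)]
    rw [← integral_eq_lintegral_of_nonneg_ae (.of_forall fun _ => by positivity)
      (measurable_norm.pow_const p).aestronglyMeasurable, integral_norm_rpow_stdGaussian hk,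
      finrank_euclideanSpace_fin, Nat.cast_succ]
  calc
    _ = ∫ Y, |(of fun i j => Y i j).det| ^ p ∂gaussianRows (Fin n) (Fin n) := by
      rw [← hrows.map_eq, integral_map hrows.aemeasurable
        (measurable_abs_det_rpow p).aestronglyMeasurable]
    _ = (∫⁻ Y, ENNReal.ofReal (|(of fun i j => Y i j).det| ^ p)
          ∂gaussianRows (Fin n) (Fin n)).toReal :=
      integral_eq_lintegral_of_nonneg_ae (.of_forall fun _ => by positivity)
        (measurable_abs_det_rpow p).aestronglyMeasurable
    _ = _ := by
      rw [lintegral_abs_det_rpow, ENNReal.toReal_prod]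
      exact Finset.prod_congr rfl fun k _ => hnorm k

theorem prod_range_div_of_ne_zero {G : Type*} [CommGroupWithZero G] {u : ℕ → G}
    (hu : ∀ k, u k ≠ 0) (n : ℕ) : ∏ k ∈ Finset.range n, u (k + 1) / u k = u n / u 0 := by
  induction n with
  | zero => simp [hu 0]
  | succ n ih => rw [Finset.prod_range_succ_comm, ih, div_mul_div_cancel₀ (hu n)]

/-- If `X` is an `n×n` random matrix with independent standard Gaussian
entries, then `E|det X| = 2^{n/2} Γ((n+1)/2) / √π`. -/
theorem stmt_14 (n : ℕ) :
    ∫ f : Fin n × Fin n → ℝ, |(Matrix.of fun i j => f (i, j)).det|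
        ∂(Measure.pi fun _ : Fin n × Fin n => gaussianReal 0 1) =
      (2 : ℝ) ^ ((n : ℝ) / 2) * Real.Gamma (((n : ℝ) + 1) / 2) /
        Real.sqrt Real.pi := by
  have hΓ (k : ℕ) : Real.Gamma ((k + 1) / 2) ≠ 0 := (Real.Gamma_pos_of_pos (by positivity)).ne'
  calc
    _ = ∏ k ∈ Finset.range n,
          2 ^ (1 / 2 : ℝ) * (Real.Gamma (((k + 1 : ℕ) + 1) / 2) / Real.Gamma ((k + 1) / 2)) := by
      simpa [mul_div_assoc] using integral_abs_det_rpow_pi_gaussianReal (p := 1) (by norm_num) n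
    _ = (2 ^ (1 / 2 : ℝ)) ^ n *
          (Real.Gamma ((n + 1) / 2) / Real.Gamma (((0 : ℕ) + 1) / 2)) := by
      rw [Finset.prod_mul_distrib, Finset.prod_const, Finset.card_range,
        prod_range_div_of_ne_zero hΓ]
    _ = _ := by
      rw [← Real.rpow_mul_natCast zero_le_two, one_div_mul_eq_div, Nat.cast_zero, zero_add,
        Real.Gamma_one_half_eq, mul_div_assoc]
end
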